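/- arXiv:1410.5339 — 3 statements merged into one kernel-verified Lean document; each statement's English description precedes it below -/
import Mathlib

section
/- Let E be a real Banach space, C a nonempty subset of E, and let ζ, η be nonnegative real numbers. Every firmly nonexpansive self-mapping T of C is a (ζ+2η, −η, −ζ, 0)-symmetric generalized hybrid mapping, i.e., (ζ+2η)‖Tx−Ty‖² − η(‖x−Ty‖² + ‖Tx−y‖²) − ζ‖x−y‖² ≤ 0 for all x, y ∈ C. -/
/-!
A functional `j` in the normalized duality mapping at `u` is a subgradient of `½‖·‖²` at `u`. For
`u = T x - T y`, firm nonexpansiveness says that some such `j` is nonnegative on the displacement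
`(x - y) - u`, so the subgradient inequality at `x - y` gives `‖u‖² ≤ ‖x - y‖²`. Since
`x - T y = u + (x - T x)` and `T x - y = u + (T y - y)`, where `x - T x` and `T y - y` sum to the
same displacement, adding the subgradient inequalities at these two points gives
`2‖u‖² ≤ ‖x - T y‖² + ‖T x - y‖²`. The theorem is the combination of the two bounds with
weights `ζ` and `η`.
-/

section

variable {E : Type*} [SeminormedAddCommGroup E] [NormedSpace ℝ E]

/-- The normalized duality mapping `J : E → 2^{E*}`, whose values are encoded as sets of continuous
linear functionals. -/
def normalizedDuality (x : E) : Set (E →L[ℝ] ℝ) :=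
  {j | j x = ‖x‖ ^ 2 ∧ ‖j‖ ^ 2 = ‖x‖ ^ 2}

/-- Firm nonexpansiveness of a mapping `T` on `C`. The mapping is a total function of which only
the values on `C` matter, and it may take values outside `C`. -/
def FirmlyNonexpansiveOn (T : E → E) (C : Set E) : Prop :=
  ∀ x ∈ C, ∀ y ∈ C, ∃ j ∈ normalizedDuality (T x - T y), ‖T x - T y‖ ^ 2 ≤ j (x - y)

/-- The `(α, β, γ, δ)`-symmetric generalized hybrid mappings on `C`, encoded like
`FirmlyNonexpansiveOn` as total functions that may take values outside `C`. -/
def SymmGenHybridOn (α β γ δ : ℝ) (T : E → E) (C : Set E) : Prop :=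
  ∀ x ∈ C, ∀ y ∈ C,
    α * ‖T x - T y‖ ^ 2 + β * (‖x - T y‖ ^ 2 + ‖T x - y‖ ^ 2) + γ * ‖x - y‖ ^ 2
      + δ * (‖x - T x‖ ^ 2 + ‖y - T y‖ ^ 2) ≤ 0

theorem two_mul_apply_le_norm_sq_add_norm_sq (j : E →L[ℝ] ℝ) (v : E) :
    2 * j v ≤ ‖j‖ ^ 2 + ‖v‖ ^ 2 :=
  calc
    2 * j v ≤ 2 * (‖j‖ * ‖v‖) := by gcongr; exact (le_abs_self _).trans (j.le_opNorm v)
    _ = 2 * ‖j‖ * ‖v‖ := by ring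
    _ ≤ ‖j‖ ^ 2 + ‖v‖ ^ 2 := two_mul_le_add_sq ‖j‖ ‖v‖

theorem norm_sq_add_two_mul_apply_le_of_mem_normalizedDuality {u : E} {j : E →L[ℝ] ℝ}
    (hj : j ∈ normalizedDuality u) (w : E) : ‖u‖ ^ 2 + 2 * j w ≤ ‖u + w‖ ^ 2 := by
  obtain ⟨apply_self, norm_sq⟩ := hj
  have young := two_mul_apply_le_norm_sq_add_norm_sq j (u + w)
  rw [map_add, apply_self, norm_sq] at young
  linarith

namespace FirmlyNonexpansiveOn

variable {T : E → E} {C : Set E} {x y : E}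

theorem exists_apply_displacement_nonneg (hT : FirmlyNonexpansiveOn T C) (hx : x ∈ C)
    (hy : y ∈ C) : ∃ j ∈ normalizedDuality (T x - T y), 0 ≤ j ((x - y) - (T x - T y)) := by
  obtain ⟨j, hj, hle⟩ := hT x hx y hy
  refine ⟨j, hj, ?_⟩
  rwa [map_sub, hj.1, sub_nonneg]

theorem norm_sub_le (hT : FirmlyNonexpansiveOn T C) (hx : x ∈ C) (hy : y ∈ C) :
    ‖T x - T y‖ ≤ ‖x - y‖ := by
  obtain ⟨j, hj, hpos⟩ := hT.exists_apply_displacement_nonneg hx hy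
  have subgradient := norm_sq_add_two_mul_apply_le_of_mem_normalizedDuality hj
    ((x - y) - (T x - T y))
  rw [add_sub_cancel] at subgradient
  exact le_of_sq_le_sq (by linarith) (norm_nonneg _)

/-- In a Hilbert space, this is the nonspreading inequality of Kohsaka and Takahashi. -/
theorem two_mul_norm_sub_sq_le (hT : FirmlyNonexpansiveOn T C) (hx : x ∈ C) (hy : y ∈ C) :
    2 * ‖T x - T y‖ ^ 2 ≤ ‖x - T y‖ ^ 2 + ‖T x - y‖ ^ 2 := by
  obtain ⟨j, hj, hpos⟩ := hT.exists_apply_displacement_nonneg hx hy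
  have at_x_sub_Ty := norm_sq_add_two_mul_apply_le_of_mem_normalizedDuality hj (x - T x)
  have at_Tx_sub_y := norm_sq_add_two_mul_apply_le_of_mem_normalizedDuality hj (T y - y)
  rw [show T x - T y + (x - T x) = x - T y by abel] at at_x_sub_Ty
  rw [sub_add_sub_cancel] at at_Tx_sub_y
  have displacement_split : j ((x - y) - (T x - T y)) = j (x - T x) + j (T y - y) := by
    rw [← map_add]
    congr 1
    abel
  linarith

end FirmlyNonexpansiveOn

theorem firmlyNonexpansive_symm_gen_hybrid_general {T : E → E} {C : Set E} {ζ η : ℝ}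
    (hζ : 0 ≤ ζ) (hη : 0 ≤ η) (hT : FirmlyNonexpansiveOn T C) :
    SymmGenHybridOn (ζ + 2 * η) (-η) (-ζ) 0 T C := by
  intro x hx y hy
  have nonexpansive : ζ * ‖T x - T y‖ ^ 2 ≤ ζ * ‖x - y‖ ^ 2 := by
    gcongr
    exact hT.norm_sub_le hx hy
  have nonspreading :
      η * (2 * ‖T x - T y‖ ^ 2) ≤ η * (‖x - T y‖ ^ 2 + ‖T x - y‖ ^ 2) :=
    mul_le_mul_of_nonneg_left (hT.two_mul_norm_sub_sq_le hx hy) hη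
  linarith

end

/-- Let `E` be a real Banach space, `C` a nonempty subset of `E`, and `ζ, η ≥ 0`.
Every firmly nonexpansive self-mapping `T` of `C` is a `(ζ+2η, −η, −ζ, 0)`-symmetric generalized
hybrid mapping: `(ζ+2η)‖Tx−Ty‖² − η(‖x−Ty‖² + ‖Tx−y‖²) − ζ‖x−y‖² ≤ 0` for all `x, y ∈ C`.
Here firm nonexpansiveness means: for all `x, y ∈ C` there is `j` in the normalized duality
mapping evaluated at `Tx − Ty` (i.e. `j(Tx−Ty) = ‖Tx−Ty‖² = ‖j‖²`) with `‖Tx−Ty‖² ≤ j(x−y)`. -/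
theorem firmlyNonexpansive_symm_gen_hybrid
    {E : Type*} [NormedAddCommGroup E] [NormedSpace ℝ E] [CompleteSpace E]
    (C : Set E) (hCne : C.Nonempty)
    (T : E → E) (hTself : Set.MapsTo T C C)
    (ζ η : ℝ) (hζ : 0 ≤ ζ) (hη : 0 ≤ η)
    (hfirm : ∀ x ∈ C, ∀ y ∈ C, ∃ j : E →L[ℝ] ℝ,
      j (T x - T y) = ‖T x - T y‖ ^ 2 ∧ ‖j‖ ^ 2 = ‖T x - T y‖ ^ 2 ∧
      ‖T x - T y‖ ^ 2 ≤ j (x - y)) :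
    ∀ x ∈ C, ∀ y ∈ C,
      (ζ + 2 * η) * ‖T x - T y‖ ^ 2 - η * (‖x - T y‖ ^ 2 + ‖T x - y‖ ^ 2)
        - ζ * ‖x - y‖ ^ 2 ≤ 0 := by
  have hT : FirmlyNonexpansiveOn T C := fun x hx y hy ↦
    let ⟨j, apply_self, norm_sq, hle⟩ := hfirm x hx y hy
    ⟨j, ⟨apply_self, norm_sq⟩, hle⟩
  simpa [SymmGenHybridOn, sub_eq_add_neg] using firmlyNonexpansive_symm_gen_hybrid_general hζ hη hT
end

section
/- Let E be a uniformly convex real Banach space, C a nonempty closed convex subset of E, and T an (α,β,γ,δ)-symmetric generalized hybrid self-mapping of C satisfying α+2β+γ ≥ 0, α+β > 0 and δ ≥ 0. Then the following are equivalent: (i) the set of fixed points of T is nonempty; (ii) there exists x ∈ C such that the orbit {Tⁿx : n ∈ ℕ} is bounded. -/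
/-!
Average the defining inequality along a bounded orbit `x` with a mean `L` on bounded functions that
is invariant under the shift. With `g z = L (‖x - z‖ ^ 2)`, invariance turns the inequality into
`α g (T z) + β (g (T z) + g z) + γ g z ≤ 0`, and the sign conditions then give `g (T z) ≤ g z`.
Uniform convexity of the space passes to `g`, so `g` has exactly one minimizer on `C`, and `T` must
fix it.
-/

open Bornology Filter Function Topology
open scoped BoundedContinuousFunction

section UniformConvexity

variable {E : Type*} [NormedAddCommGroup E] [NormedSpace ℝ E]

/-- Uniform convexity on bounded sets, in midpoint form: the gain `δ` depends only on the separation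
`ε` of the two points and on the radius `R` of a ball containing them. -/
def UniformlyMidpointConvex (f : E → ℝ) : Prop :=
  ∀ R, ∀ ε > 0, ∃ δ > 0, ∀ ⦃u v : E⦄, ‖u‖ ≤ R → ‖v‖ ≤ R → ε ≤ ‖u - v‖ →
    f (midpoint ℝ u v) ≤ (f u + f v) / 2 - δ

namespace UniformlyMidpointConvex

variable {f : E → ℝ} {C : Set E}

theorem eq_of_isMinOn (hf : UniformlyMidpointConvex f) (hC : Convex ℝ C) {p q : E} (hp : p ∈ C)
    (hmin : IsMinOn f C p) (hq : q ∈ C) (hqp : f q ≤ f p) : q = p := by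
  by_contra hne
  obtain ⟨δ, hδ, hmid⟩ := hf (max ‖q‖ ‖p‖) ‖q - p‖ (norm_sub_pos_iff.2 hne)
  linarith [isMinOn_iff.1 hmin _ (hC.midpoint_mem hq hp),
    hmid (le_max_left _ _) (le_max_right _ _) le_rfl]

theorem cauchySeq_of_tendsto (hf : UniformlyMidpointConvex f) (hC : Convex ℝ C) {m : ℝ}
    (hm : ∀ y ∈ C, m ≤ f y) {z : ℕ → E} (hz : ∀ n, z n ∈ C) (hbdd : IsBounded (Set.range z))
    (hlim : Tendsto (fun n => f (z n)) atTop (𝓝 m)) : CauchySeq z := by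
  obtain ⟨R, hR⟩ := hbdd.exists_norm_le
  have hzR : ∀ n, ‖z n‖ ≤ R := fun n => hR _ ⟨n, rfl⟩
  refine Metric.cauchySeq_iff.2 fun ε hε => ?_
  obtain ⟨δ, hδ, hmid⟩ := hf R ε hε
  obtain ⟨N, hN⟩ := eventually_atTop.1 (hlim.eventually_lt_const (lt_add_of_pos_right m hδ))
  refine ⟨N, fun k hk l hl => ?_⟩
  rw [dist_eq_norm]
  by_contra! hkl
  linarith [hm _ (hC.midpoint_mem (hz k) (hz l)), hmid (hzR k) (hzR l) hkl, hN k hk, hN l hl]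

theorem exists_isMinOn [CompleteSpace E] (hf : UniformlyMidpointConvex f) (hcont : Continuous f)
    (hcoercive : Tendsto f (cobounded E) atTop) (hC : Convex ℝ C) (hCcl : IsClosed C)
    (hCne : C.Nonempty) (hbelow : BddBelow (f '' C)) : ∃ p ∈ C, IsMinOn f C p := by
  obtain ⟨u, hanti, hlim, hmem⟩ := exists_seq_tendsto_sInf (hCne.image f) hbelow
  choose z hzC hzu using hmem
  have hinf : ∀ y ∈ C, sInf (f '' C) ≤ f y := fun y hy => csInf_le hbelow ⟨y, hy, rfl⟩
  have hfz : Tendsto (fun n => f (z n)) atTop (𝓝 (sInf (f '' C))) := by simpa only [hzu] using hlim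
  have hsublevel : IsBounded {y | f y ≤ u 0} := by
    filter_upwards [hcoercive.eventually_gt_atTop (u 0)] with y hy using not_le.2 hy
  have hbdd : IsBounded (Set.range z) :=
    hsublevel.subset (Set.range_subset_iff.2 fun n => (hzu n).trans_le (hanti (Nat.zero_le n)))
  obtain ⟨p, hp⟩ := cauchySeq_tendsto_of_complete (hf.cauchySeq_of_tendsto hC hinf hzC hbdd hfz)
  have hfp : f p = sInf (f '' C) := tendsto_nhds_unique ((hcont.tendsto p).comp hp) hfz
  exact ⟨p, hCcl.mem_of_tendsto hp (Eventually.of_forall hzC),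
    isMinOn_iff.2 fun y hy => hfp.trans_le (hinf y hy)⟩

end UniformlyMidpointConvex

variable (E) [UniformConvexSpace E]

theorem exists_forall_norm_add_le_two_mul_sub_of_le {ε : ℝ} (hε : 0 < ε) (R : ℝ) :
    ∃ δ > 0, ∀ r ≤ R, ∀ ⦃u v : E⦄, ‖u‖ ≤ r → ‖v‖ ≤ r → ε ≤ ‖u - v‖ → ‖u + v‖ ≤ 2 * r - δ := by
  rcases le_or_gt R 0 with hR | hR
  · refine ⟨1, one_pos, fun r hr u v hu hv huv => ?_⟩
    linarith [norm_sub_le u v]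
  obtain ⟨d, hd, hunit⟩ := exists_forall_closed_ball_dist_add_le_two_sub E (div_pos hε hR)
  refine ⟨ε / 2 * d, by positivity, fun r hr u v hu hv huv => ?_⟩
  have hεr : ε / 2 ≤ r := by linarith [norm_sub_le u v]
  have hr0 : 0 < r := by linarith
  have hscale (w : E) : ‖r⁻¹ • w‖ = ‖w‖ / r := by
    rw [norm_smul, norm_inv, Real.norm_of_nonneg hr0.le, div_eq_inv_mul]
  have hadd : ‖u + v‖ / r ≤ 2 - d := by
    rw [← hscale, smul_add]
    apply hunit
    · rwa [hscale, div_le_one hr0]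
    · rwa [hscale, div_le_one hr0]
    · rw [← smul_sub, hscale]
      gcongr
  calc ‖u + v‖ ≤ (2 - d) * r := (div_le_iff₀ hr0).1 hadd
    _ = 2 * r - r * d := by ring
    _ ≤ 2 * r - ε / 2 * d := by gcongr

theorem uniformlyMidpointConvex_norm_sq : UniformlyMidpointConvex fun u : E => ‖u‖ ^ 2 := by
  intro R ε hε
  obtain ⟨δ, hδ, hconv⟩ := exists_forall_norm_add_le_two_mul_sub_of_le E hε R
  refine ⟨δ ^ 2 / 16, by positivity, fun u v hu hv huv => ?_⟩
  wlog hvu : ‖v‖ ≤ ‖u‖ generalizing u v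
  · simp only [midpoint_comm u, add_comm (‖u‖ ^ 2)]
    exact this v u hv hu (by rwa [norm_sub_rev]) (le_of_not_ge hvu)
  have hmid : ‖midpoint ℝ u v‖ = ‖u + v‖ / 2 := by
    rw [midpoint_eq_smul_add, norm_smul, invOf_eq_inv, norm_inv, Real.norm_two, inv_mul_eq_div]
  have htri : ‖u + v‖ ≤ ‖u‖ + ‖v‖ := norm_add_le u v
  have hgain : ‖u + v‖ ≤ 2 * ‖u‖ - δ := hconv _ hu le_rfl hvu huv
  simp only [hmid]
  -- Norms that differ gain from strict convexity of the square, nearly equal ones from `hgain`.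
  rcases le_or_gt (δ / 2) (‖u‖ - ‖v‖) with hfar | hnear
  · have hsum : ‖u + v‖ ^ 2 ≤ (‖u‖ + ‖v‖) ^ 2 := by gcongr
    have hdiff : (δ / 2) ^ 2 ≤ (‖u‖ - ‖v‖) ^ 2 := by gcongr
    linarith
  · have hshort : ‖u + v‖ + δ / 2 ≤ ‖u‖ + ‖v‖ := by linarith
    have hsum : (‖u + v‖ + δ / 2) ^ 2 ≤ (‖u‖ + ‖v‖) ^ 2 := by gcongr
    have hcross : 0 ≤ δ * ‖u + v‖ := by positivity
    linarith [sq_nonneg (‖u‖ - ‖v‖)]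

end UniformConvexity

section Mean

variable {X : Type*} [TopologicalSpace X] {L : (X →ᵇ ℝ) →ₚ[ℝ] ℝ}

theorem mean_const (hL : L 1 = 1) (c : ℝ) : L (.const X c) = c := by
  have hc : BoundedContinuousFunction.const X c = c • 1 := by ext; simp
  rw [hc, map_smul, hL, smul_eq_mul, mul_one]

theorem abs_mean_le_norm (hL : L 1 = 1) (f : X →ᵇ ℝ) : |L f| ≤ ‖f‖ := by
  have hupper (g : X →ᵇ ℝ) : L g ≤ ‖g‖ :=
    (OrderHomClass.mono L fun t => (le_abs_self _).trans (g.norm_coe_le_norm t)).trans_eq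
      (mean_const hL ‖g‖)
  exact abs_le'.2 ⟨hupper f, by simpa only [map_neg, norm_neg] using hupper (-f)⟩

theorem continuous_mean (hL : L 1 = 1) : Continuous L :=
  AddMonoidHomClass.continuous_of_bound L 1 fun f => by
    simpa only [one_mul, Real.norm_eq_abs] using abs_mean_le_norm hL f

theorem exists_mean_forall_tendsto_ultrafilter {ι : Type*} (U : Ultrafilter ι)
    {Λ : ι → (X →ᵇ ℝ) →ₚ[ℝ] ℝ} (hΛ : ∀ i, Λ i 1 = 1) :
    ∃ L : (X →ᵇ ℝ) →ₚ[ℝ] ℝ, L 1 = 1 ∧ ∀ f, Tendsto (fun i => Λ i f) U (𝓝 (L f)) := by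
  have hlim (f : X →ᵇ ℝ) : ∃ l, Tendsto (fun i => Λ i f) U (𝓝 l) := by
    obtain ⟨l, -, hl⟩ := (isCompact_Icc (a := -‖f‖) (b := ‖f‖)).ultrafilter_le_nhds
      (U.map fun i => Λ i f) (tendsto_principal.2 (Eventually.of_forall fun i =>
        abs_le.1 (abs_mean_le_norm (hΛ i) f)))
    exact ⟨l, hl⟩
  choose L hL using hlim
  let limit : (X →ᵇ ℝ) →ₗ[ℝ] ℝ :=
    { toFun := L
      map_add' := fun f g => tendsto_nhds_unique (hL (f + g)) <| by
        simpa only [map_add] using (hL f).add (hL g)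
      map_smul' := fun c f => tendsto_nhds_unique (hL (c • f)) <| by
        simpa only [map_smul, RingHom.id_apply] using (hL f).const_smul c }
  refine ⟨.mk₀ limit fun f hf => ge_of_tendsto' (hL f) fun i => (Λ i).map_nonneg hf, ?_, hL⟩
  exact tendsto_nhds_unique (hL 1) (by simpa only [hΛ] using tendsto_const_nhds)

/-- An invariant mean for `φ`: a positive, unital, `φ`-invariant functional on the bounded
continuous functions. For the successor map on `ℕ` these are the Banach limits. -/
structure IsInvariantMean (φ : C(X, X)) (L : (X →ᵇ ℝ) →ₚ[ℝ] ℝ) : Prop where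
  map_one : L 1 = 1
  map_compContinuous (f : X →ᵇ ℝ) : L (f.compContinuous φ) = L f

/-- The Birkhoff average of the first `n + 1` points of the orbit of `t` under `φ`, as a mean on
bounded continuous functions; the shift of the index avoids the empty average, which is `0`. -/
noncomputable def birkhoffMean (φ : X → X) (t : X) (n : ℕ) : (X →ᵇ ℝ) →ₚ[ℝ] ℝ :=
  .mk₀
    { toFun := fun f => birkhoffAverage ℝ φ f (n + 1) t
      map_add' := fun f g => by
        simp only [birkhoffAverage, birkhoffSum, BoundedContinuousFunction.coe_add, Pi.add_apply,
          Finset.sum_add_distrib, smul_add]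
      map_smul' := fun c f => by
        simp only [birkhoffAverage, birkhoffSum, BoundedContinuousFunction.coe_smul,
          ← Finset.smul_sum, RingHom.id_apply, smul_comm c] }
    fun _ hf => smul_nonneg (by positivity) (Finset.sum_nonneg fun _ _ => hf _)

theorem birkhoffMean_apply (φ : X → X) (t : X) (n : ℕ) (f : X →ᵇ ℝ) :
    birkhoffMean φ t n f = birkhoffAverage ℝ φ f (n + 1) t := rfl

theorem birkhoffMean_one (φ : X → X) (t : X) (n : ℕ) : birkhoffMean φ t n 1 = 1 := by
  rw [birkhoffMean_apply, birkhoffAverage_of_comp_eq ℝ rfl (by positivity)]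
  rfl

theorem tendsto_birkhoffMean_compContinuous_sub (φ : C(X, X)) (t : X) (f : X →ᵇ ℝ) :
    Tendsto (fun n => birkhoffMean φ t n (f.compContinuous φ) - birkhoffMean φ t n f)
      atTop (𝓝 0) := by
  have hcomp (n : ℕ) : birkhoffMean φ t n (f.compContinuous φ) =
      birkhoffAverage ℝ φ f (n + 1) (φ t) := by
    simp only [birkhoffMean_apply, birkhoffAverage, birkhoffSum,
      BoundedContinuousFunction.compContinuous_apply, ← iterate_succ_apply, ← iterate_succ_apply']
  simp only [hcomp, birkhoffMean_apply]
  exact (tendsto_birkhoffAverage_apply_sub_birkhoffAverage' ℝ f.isBounded_range φ t).comp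
    (tendsto_add_atTop_nat 1)

theorem exists_isInvariantMean [Nonempty X] (φ : C(X, X)) : ∃ L, IsInvariantMean φ L := by
  obtain ⟨t⟩ := ‹Nonempty X›
  obtain ⟨L, hone, hL⟩ := exists_mean_forall_tendsto_ultrafilter (hyperfilter ℕ)
    (birkhoffMean_one φ t)
  refine ⟨L, hone, fun f => sub_eq_zero.1 ?_⟩
  exact tendsto_nhds_unique ((hL _).sub (hL f))
    ((tendsto_birkhoffMean_compContinuous_sub φ t f).mono_left Nat.hyperfilter_le_atTop)

end Mean

section MeanSqDist

variable {X E : Type*} [TopologicalSpace X] [NormedAddCommGroup E]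

/-- The function `t ↦ ‖x t - z‖ ^ 2`, bundled as a bounded continuous function so that a mean can be
applied to it. -/
noncomputable def sqDist (x : X →ᵇ E) (z : E) : X →ᵇ ℝ :=
  (x - .const X z).normComp ^ 2

theorem sqDist_nonneg (x : X →ᵇ E) (z : E) : 0 ≤ sqDist x z := fun _ => sq_nonneg _

theorem continuous_sqDist (x : X →ᵇ E) : Continuous (sqDist x) := by
  have hdist : LipschitzWith 1 fun z : E => (x - .const X z).normComp :=
    .of_dist_le_mul fun z w => (BoundedContinuousFunction.dist_le (by positivity)).2 fun t => by
      simpa [dist_eq_norm, norm_sub_rev z w] using abs_norm_sub_norm_le (x t - z) (x t - w)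
  exact hdist.continuous.pow 2

variable {L : (X →ᵇ ℝ) →ₚ[ℝ] ℝ}

theorem half_norm_sq_sub_norm_sq_le_mean_sqDist (hL : L 1 = 1) (x : X →ᵇ E) (z : E) :
    ‖z‖ ^ 2 / 2 - ‖x‖ ^ 2 ≤ L (sqDist x z) := by
  rw [← mean_const hL (‖z‖ ^ 2 / 2 - ‖x‖ ^ 2)]
  refine OrderHomClass.mono L fun t => ?_
  have htri : ‖z‖ ≤ ‖x‖ + ‖x t - z‖ :=
    (norm_le_norm_add_norm_sub' z (x t)).trans <| by
      rw [norm_sub_rev]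
      gcongr
      exact x.norm_coe_le_norm t
  change ‖z‖ ^ 2 / 2 - ‖x‖ ^ 2 ≤ ‖x t - z‖ ^ 2
  nlinarith [norm_nonneg z, sq_nonneg (‖x‖ - ‖x t - z‖)]

theorem tendsto_mean_sqDist_cobounded_atTop (hL : L 1 = 1) (x : X →ᵇ E) :
    Tendsto (fun z => L (sqDist x z)) (cobounded E) atTop := by
  refine tendsto_atTop_mono (half_norm_sq_sub_norm_sq_le_mean_sqDist hL x) ?_
  exact tendsto_atTop_add_const_right _ _ <| Tendsto.atTop_div_const two_pos <|
    (tendsto_pow_atTop two_ne_zero).comp tendsto_norm_cobounded_atTop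

theorem uniformlyMidpointConvex_mean_sqDist [NormedSpace ℝ E] [UniformConvexSpace E]
    (hL : L 1 = 1) (x : X →ᵇ E) : UniformlyMidpointConvex fun z => L (sqDist x z) := by
  intro R ε hε
  obtain ⟨δ, hδ, hconv⟩ := uniformlyMidpointConvex_norm_sq E (‖x‖ + R) ε hε
  refine ⟨δ, hδ, fun z w hz hw hzw => ?_⟩
  have hnorm {y : E} (hy : ‖y‖ ≤ R) (t : X) : ‖x t - y‖ ≤ ‖x‖ + R :=
    (norm_sub_le _ _).trans (add_le_add (x.norm_coe_le_norm t) hy)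
  have hpointwise : sqDist x (midpoint ℝ z w) ≤
      (2⁻¹ : ℝ) • (sqDist x z + sqDist x w) - .const X δ := fun t => by
    have hmid : x t - midpoint ℝ z w = midpoint ℝ (x t - z) (x t - w) := by
      simpa only [vsub_eq_sub, midpoint_self] using midpoint_vsub_midpoint (R := ℝ) (x t) (x t) z w
    change ‖x t - midpoint ℝ z w‖ ^ 2 ≤ 2⁻¹ * (‖x t - z‖ ^ 2 + ‖x t - w‖ ^ 2) - δ
    rw [hmid, inv_mul_eq_div]
    exact hconv (hnorm hz t) (hnorm hw t) (by rwa [sub_sub_sub_cancel_left, norm_sub_rev])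
  have hmean := OrderHomClass.mono L hpointwise
  rwa [map_sub, map_smul, map_add, mean_const hL, smul_eq_mul, inv_mul_eq_div] at hmean

end MeanSqDist

section SymmetricGeneralizedHybrid

variable {X E : Type*} [TopologicalSpace X] [NormedAddCommGroup E]

/-- `T` satisfies the `(α, β, γ, δ)`-symmetric generalized hybrid inequality on `C`. -/
def IsSymmGenHybridOn (α β γ δ : ℝ) (T : E → E) (C : Set E) : Prop :=
  ∀ x ∈ C, ∀ y ∈ C,
    α * ‖T x - T y‖ ^ 2 + β * (‖x - T y‖ ^ 2 + ‖T x - y‖ ^ 2) + γ * ‖x - y‖ ^ 2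
      + δ * (‖x - T x‖ ^ 2 + ‖y - T y‖ ^ 2) ≤ 0

theorem IsSymmGenHybridOn.mean_sqDist_map_le {α β γ δ : ℝ} {T : E → E} {C : Set E}
    (hT : IsSymmGenHybridOn α β γ δ T C) (hαβγ : 0 ≤ α + 2 * β + γ) (hαβ : 0 < α + β) (hδ : 0 ≤ δ)
    {φ : C(X, X)} {L : (X →ᵇ ℝ) →ₚ[ℝ] ℝ} (hL : IsInvariantMean φ L) {x : X →ᵇ E}
    (hxC : ∀ t, x t ∈ C) (hx : Semiconj x φ T) {z : E} (hz : z ∈ C) :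
    L (sqDist x (T z)) ≤ L (sqDist x z) := by
  have hpointwise : α • (sqDist x (T z)).compContinuous φ +
      β • (sqDist x (T z) + (sqDist x z).compContinuous φ) + γ • sqDist x z ≤ 0 := fun t => by
    change α * ‖x (φ t) - T z‖ ^ 2 + β * (‖x t - T z‖ ^ 2 + ‖x (φ t) - z‖ ^ 2) +
      γ * ‖x t - z‖ ^ 2 ≤ 0
    rw [hx.eq]
    have hδ_term : 0 ≤ δ * (‖x t - T (x t)‖ ^ 2 + ‖z - T z‖ ^ 2) := by positivity
    linarith [hT (x t) (hxC t) z hz]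
  have hmean := OrderHomClass.mono L hpointwise
  simp only [map_add, map_smul, map_zero, hL.map_compContinuous, smul_eq_mul] at hmean
  have hnonneg : 0 ≤ (α + 2 * β + γ) * L (sqDist x z) :=
    mul_nonneg hαβγ (L.map_nonneg (sqDist_nonneg x z))
  refine le_of_mul_le_mul_left ?_ hαβ
  linarith

end SymmetricGeneralizedHybrid

/-- Let `E` be a uniformly convex real Banach space, `C` a nonempty closed
convex subset of `E`, and `T` an `(α,β,γ,δ)`-symmetric generalized hybrid self-mapping of `C`
with `α+2β+γ ≥ 0`, `α+β > 0`, `δ ≥ 0`. Then `T` has a fixed point if and only if the orbit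
`{Tⁿx : n ∈ ℕ}` is bounded for some `x ∈ C`. -/
theorem symm_gen_hybrid_fixedPoint_iff_boundedOrbit
    {E : Type*} [NormedAddCommGroup E] [NormedSpace ℝ E] [CompleteSpace E]
    [UniformConvexSpace E]
    (C : Set E) (hCne : C.Nonempty) (hCcl : IsClosed C) (hCcv : Convex ℝ C)
    (T : E → E) (hTself : Set.MapsTo T C C)
    (α β γ δ : ℝ)
    (hhyb : ∀ x ∈ C, ∀ y ∈ C,
      α * ‖T x - T y‖ ^ 2 + β * (‖x - T y‖ ^ 2 + ‖T x - y‖ ^ 2) + γ * ‖x - y‖ ^ 2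
        + δ * (‖x - T x‖ ^ 2 + ‖y - T y‖ ^ 2) ≤ 0)
    (h1 : α + 2 * β + γ ≥ 0) (h2 : α + β > 0) (h3 : δ ≥ 0) :
    (∃ p ∈ C, T p = p) ↔
      (∃ x ∈ C, Bornology.IsBounded (Set.range fun n : ℕ => T^[n] x)) := by
  constructor
  · rintro ⟨p, hp, hTp⟩
    refine ⟨p, hp, ?_⟩
    simp only [iterate_fixed hTp, Set.range_const, isBounded_singleton]
  · rintro ⟨x₀, hx₀, hbdd⟩
    let x : ℕ →ᵇ E := ⟨⟨fun n => T^[n] x₀, continuous_of_discreteTopology⟩,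
      Metric.isBounded_range_iff.1 hbdd⟩
    let succ : C(ℕ, ℕ) := ⟨Nat.succ, continuous_of_discreteTopology⟩
    have hxC : ∀ n, x n ∈ C := fun n => hTself.iterate n hx₀
    have hx : Semiconj x succ T := fun n => iterate_succ_apply' T n x₀
    obtain ⟨L, hL⟩ := exists_isInvariantMean succ
    have hconv := uniformlyMidpointConvex_mean_sqDist hL.map_one x
    have hbelow : BddBelow ((fun z => L (sqDist x z)) '' C) :=
      ⟨0, Set.forall_mem_image.2 fun z _ => L.map_nonneg (sqDist_nonneg x z)⟩
    obtain ⟨p, hp, hmin⟩ := hconv.exists_isMinOn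
      ((continuous_mean hL.map_one).comp (continuous_sqDist x))
      (tendsto_mean_sqDist_cobounded_atTop hL.map_one x) hCcv hCcl hCne hbelow
    exact ⟨p, hp, hconv.eq_of_isMinOn hCcv hp hmin (hTself hp)
      (IsSymmGenHybridOn.mean_sqDist_map_le hhyb h1 h2 h3 hL hxC hx hp)⟩
end

section
/- Let E be a uniformly convex real Banach space satisfying Opial's condition, C a nonempty closed convex subset of E, and T a nonexpansive self-mapping of C with nonempty fixed point set F(T). Let {λₙ} ⊆ [0,1] and {γₙ} ⊆ [a,1] with 0 < a ≤ 1, suppose liminf λₙ(1−λₙ) > 0, and define the Ishikawa sequence by x₁ = x ∈ C, yₙ = (1−λₙ)xₙ + λₙTxₙ, x_{n+1} = (1−γₙ)xₙ + γₙTyₙ. Then {xₙ} converges weakly to some point x₀ ∈ F(T). -/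
open Filter Topology

/-!
For a fixed point `p`, uniform convexity makes the averaging step that produces `yₙ` lose at least
`λₙ (1 - λₙ) (2 ‖xₙ - p‖ - ‖(xₙ - p) + (T xₙ - p)‖)` of the distance to `p`. Hence `‖xₙ - p‖`
decreases to some `d`; as the coefficients stay away from `0`, the vectors `xₙ - p` and `T xₙ - p`
both have norm tending to `d` and sum of norm tending to `2 d`, so that `xₙ - T xₙ → 0`.
Opial's condition then shows that weak subsequential limits of `xₙ` are fixed points, and that two
of them must agree because `‖xₙ - p‖` converges for both. Such limits exist because closed bounded
convex sets are weakly sequentially compact. For their weak compactness, a directed family of closed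
convex sets is intersected by following points of asymptotically minimal norm, which form a Cauchy
filter.
-/

section UniformConvex

variable {E : Type*} [SeminormedAddCommGroup E] [NormedSpace ℝ E] [UniformConvexSpace E]

theorem exists_forall_norm_sub_le_of_le_norm_add {r ε : ℝ} (hr : 0 ≤ r) (hε : 0 < ε) :
    ∃ η > 0, ∀ u v : E, ‖u‖ ≤ r + η → ‖v‖ ≤ r + η → 2 * (r - η) ≤ ‖u + v‖ → ‖u - v‖ ≤ ε := by
  rcases hr.eq_or_lt with rfl | hr
  · refine ⟨ε / 2, by positivity, fun u v hu hv _ => ?_⟩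
    linarith [norm_sub_le u v]
  obtain ⟨δ, hδ, h⟩ := exists_forall_closed_ball_dist_add_le_two_sub E
    (show 0 < ε / (2 * r) by positivity)
  refine ⟨min r (δ * r / 8), by positivity, fun u v hu hv huv => ?_⟩
  set η := min r (δ * r / 8)
  have hη : 0 < η := by positivity
  have hηr : η ≤ r := min_le_left _ _
  have hηδ : η ≤ δ * r / 8 := min_le_right _ _
  have hR : 0 < r + η := by positivity
  have norm_scale (w : E) : ‖(r + η)⁻¹ • w‖ = ‖w‖ / (r + η) := by
    rw [norm_smul_of_nonneg (inv_nonneg.2 hR.le), inv_mul_eq_div]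
  have norm_scale_le {w : E} (hw : ‖w‖ ≤ r + η) : ‖(r + η)⁻¹ • w‖ ≤ 1 := by
    rwa [norm_scale, div_le_one hR]
  by_contra! hlt
  have hsep : ε / (2 * r) ≤ ‖(r + η)⁻¹ • u - (r + η)⁻¹ • v‖ := by
    rw [← smul_sub, norm_scale]
    exact div_le_div₀ (norm_nonneg _) hlt.le hR (by linarith)
  have hsum : ‖u + v‖ ≤ (2 - δ) * (r + η) := by
    have := h (norm_scale_le hu) (norm_scale_le hv) hsep
    rwa [← smul_add, norm_scale, div_le_iff₀ hR] at this
  nlinarith [mul_pos hδ hr, mul_pos hδ hη]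

theorem tendsto_sub_zero_of_tendsto_norm_add {ι : Type*} {l : Filter ι} {u v : ι → E} {d : ℝ}
    (hu : Tendsto (fun i => ‖u i‖) l (𝓝 d)) (hv : Tendsto (fun i => ‖v i‖) l (𝓝 d))
    (huv : Tendsto (fun i => ‖u i + v i‖) l (𝓝 (2 * d))) :
    Tendsto (fun i => u i - v i) l (𝓝 0) := by
  rcases l.eq_or_neBot with rfl | _
  · exact tendsto_bot
  have hd : 0 ≤ d := ge_of_tendsto' hu fun i => norm_nonneg _
  refine Metric.nhds_basis_closedBall.tendsto_right_iff.2 fun ε hε => ?_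
  obtain ⟨η, hη, h⟩ := exists_forall_norm_sub_le_of_le_norm_add (E := E) hd hε
  filter_upwards [hu.eventually_le_const (lt_add_of_pos_right d hη),
    hv.eventually_le_const (lt_add_of_pos_right d hη),
    huv.eventually_const_le (show 2 * (d - η) < 2 * d by linarith)] with i hui hvi huvi
  simpa using h _ _ hui hvi huvi

theorem cauchy_of_tendsto_norm_of_forall_exists_convex {F : Filter E} [F.NeBot] {r : ℝ}
    (hnorm : Tendsto norm F (𝓝 r)) (hF : ∀ s < r, ∃ K ∈ F, Convex ℝ K ∧ ∀ z ∈ K, s < ‖z‖) :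
    Cauchy F := by
  have hfst : Tendsto (fun z : E × E => ‖z.1‖) (F ×ˢ F) (𝓝 r) := hnorm.comp tendsto_fst
  have hsnd : Tendsto (fun z : E × E => ‖z.2‖) (F ×ˢ F) (𝓝 r) := hnorm.comp tendsto_snd
  have hadd : Tendsto (fun z : E × E => ‖z.1 + z.2‖) (F ×ˢ F) (𝓝 (2 * r)) := by
    refine tendsto_order.2 ⟨fun s hs => ?_, fun s hs => ?_⟩
    · obtain ⟨K, hKF, hK, hsK⟩ := hF (s / 2) (by linarith)
      filter_upwards [prod_mem_prod hKF hKF] with z hz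
      have hmid := hsK _ (hK.midpoint_mem hz.1 hz.2)
      rw [midpoint_eq_smul_add, invOf_eq_inv, norm_smul_of_nonneg (by positivity)] at hmid
      linarith
    · have := (hfst.add hsnd).eventually_lt_const (show r + r < s by linarith)
      exact this.mono fun z hz => (norm_add_le _ _).trans_lt hz
  refine ⟨‹F.NeBot›, ?_⟩
  rw [uniformity_eq_comap_nhds_zero_swapped, ← tendsto_iff_comap]
  exact tendsto_sub_zero_of_tendsto_norm_add hfst hsnd hadd

theorem nonempty_iInter_of_directed_isClosed_convex [CompleteSpace E] {ι : Type*} [Nonempty ι]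
    {K : ι → Set E} (hdir : Directed (· ⊇ ·) K) (hclosed : ∀ i, IsClosed (K i))
    (hconvex : ∀ i, Convex ℝ (K i)) {R : ℝ}
    (hR : ∀ i, (K i ∩ Metric.closedBall 0 R).Nonempty) : (⋂ i, K i).Nonempty := by
  have hbdd : BddAbove (Set.range fun i => Metric.infDist 0 (K i)) := by
    refine ⟨R, Set.forall_mem_range.2 fun i => ?_⟩
    obtain ⟨z, hzK, hzR⟩ := hR i
    exact (Metric.infDist_le_dist_of_mem hzK).trans (Metric.mem_closedBall'.1 hzR)
  set r := ⨆ i, Metric.infDist 0 (K i)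
  have exists_lt_norm {s : ℝ} (hs : s < r) : ∃ i, ∀ z ∈ K i, s < ‖z‖ := by
    obtain ⟨i, hi⟩ := exists_lt_of_lt_ciSup hs
    exact ⟨i, fun z hz => dist_zero_left z ▸ hi.trans_le (Metric.infDist_le_dist_of_mem hz)⟩
  let F : Filter E := (⨅ i, 𝓟 (K i)) ⊓ comap norm (𝓝 r)
  have hKF (i : ι) : K i ∈ F := mem_inf_of_left (mem_iInf_of_mem i (mem_principal_self _))
  have hF : F.NeBot := by
    refine ((hasBasis_iInf_principal hdir).inf (Metric.nhds_basis_ball.comap _)).neBot_iff.2 ?_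
    rintro ⟨i, ε⟩ ⟨-, hε : 0 < ε⟩
    obtain ⟨j, hj⟩ := exists_lt_norm (sub_lt_self r hε)
    obtain ⟨k, hki, hkj⟩ := hdir i j
    obtain ⟨z, hz, hzr⟩ := (Metric.infDist_lt_iff (hR k).left).1
      ((le_ciSup hbdd k).trans_lt (lt_add_of_pos_right r hε))
    rw [dist_zero_left] at hzr
    refine ⟨z, hki hz, ?_⟩
    rw [Set.mem_preimage, Metric.mem_ball, Real.dist_eq, abs_sub_lt_iff]
    exact ⟨sub_left_lt_of_lt_add hzr, sub_lt_comm.1 (hj z (hkj hz))⟩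
  have hcauchy : Cauchy F :=
    cauchy_of_tendsto_norm_of_forall_exists_convex (tendsto_comap.mono_left inf_le_right)
      fun _ hs => (exists_lt_norm hs).elim fun i hi => ⟨K i, hKF i, hconvex i, hi⟩
  obtain ⟨q, hq⟩ := CompleteSpace.complete hcauchy
  exact ⟨q, Set.mem_iInter.2 fun i => (hclosed i).mem_of_tendsto (tendsto_id'.2 hq) (hKF i)⟩

end UniformConvex

section WeakTopology

variable {𝕜 E : Type*} [RCLike 𝕜] [NormedAddCommGroup E]

theorem tendsto_toWeakSpace_iff [NormedSpace 𝕜 E] {ι : Type*} {l : Filter ι} {x : ι → E} {p : E} :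
    Tendsto (fun i => toWeakSpace 𝕜 E (x i)) l (𝓝 (toWeakSpace 𝕜 E p)) ↔
      ∀ f : StrongDual 𝕜 E, Tendsto (fun i => f (x i)) l (𝓝 (f p)) :=
  WeakBilin.tendsto_iff_forall_eval_tendsto _ fun _ _ huv =>
    SeparatingDual.eq_iff_forall_dual_eq.2 fun f => DFunLike.congr_fun huv f

theorem isBounded_range_of_tendsto_toWeakSpace [NormedSpace 𝕜 E] {x : ℕ → E} {p : E}
    (hx : Tendsto (fun n => toWeakSpace 𝕜 E (x n)) atTop (𝓝 (toWeakSpace 𝕜 E p))) :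
    Bornology.IsBounded (Set.range x) := by
  obtain ⟨R, hR⟩ := banach_steinhaus (g := fun n => NormedSpace.inclusionInDoubleDual 𝕜 E (x n))
    fun f =>
      (tendsto_toWeakSpace_iff.1 hx f).norm.bddAbove_range.imp fun _ => Set.forall_mem_range.1
  refine isBounded_iff_forall_norm_le.2 ⟨R, Set.forall_mem_range.2 fun n => ?_⟩
  exact (NormedSpace.inclusionInDoubleDualLi 𝕜).norm_map (x n) ▸ hR n

theorem exists_countable_separating_strongDual [NormedSpace 𝕜 E] {s : Set E}
    (hs : TopologicalSpace.IsSeparable s) :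
    ∃ g : ℕ → StrongDual 𝕜 E, ∀ u ∈ s, ∀ v ∈ s, u ≠ v → ∃ n, g n u ≠ g n v := by
  have := hs.secondCountableTopology
  obtain ⟨S, hS, hcover⟩ := TopologicalSpace.isOpen_iUnion_countable
    (fun f : StrongDual 𝕜 E => {z : s × s | f z.1 ≠ f z.2})
    fun f => isOpen_ne_fun (by fun_prop) (by fun_prop)
  obtain ⟨g, hg⟩ := (hS.insert 0).exists_eq_range (Set.insert_nonempty 0 S)
  refine ⟨g, fun u hu v hv huv => ?_⟩
  obtain ⟨f, hf⟩ := SeparatingDual.exists_separating_of_ne (R := 𝕜) huv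
  have hmem : ((⟨u, hu⟩, ⟨v, hv⟩) : s × s) ∈ ⋃ f ∈ S, {z : s × s | f z.1 ≠ f z.2} :=
    hcover ▸ Set.mem_iUnion.2 ⟨f, hf⟩
  obtain ⟨f', hf'S, hf'⟩ := Set.mem_iUnion₂.1 hmem
  obtain ⟨n, rfl⟩ := hg ▸ Set.mem_insert_of_mem 0 hf'S
  exact ⟨n, hf'⟩

theorem metrizableSpace_of_isCompact_of_isSeparable [NormedSpace 𝕜 E] {K : Set (WeakSpace 𝕜 E)}
    (hK : IsCompact K) (hsep : TopologicalSpace.IsSeparable (toWeakSpace 𝕜 E ⁻¹' K)) :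
    TopologicalSpace.MetrizableSpace K := by
  have := isCompact_iff_compactSpace.1 hK
  obtain ⟨g, hg⟩ := exists_countable_separating_strongDual (𝕜 := 𝕜) hsep
  exact Metric.PiNatEmbed.TopologicalSpace.MetrizableSpace.of_countable_separating
    (fun n (z : K) => g n ((toWeakSpace 𝕜 E).symm z))
    (fun n => (WeakBilin.eval_continuous (topDualPairing 𝕜 E).flip (g n)).comp
      continuous_subtype_val)
    fun u v huv => hg _ u.2 _ v.2 (Subtype.val_injective.ne huv)

variable [NormedSpace ℝ E] {C : Set E}

theorem mem_of_tendsto_toWeakSpace {ι : Type*} {l : Filter ι} [l.NeBot] (hclosed : IsClosed C)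
    (hconvex : Convex ℝ C) {x : ι → E} (hx : ∀ i, x i ∈ C) {p : E}
    (hp : Tendsto (fun i => toWeakSpace ℝ E (x i)) l (𝓝 (toWeakSpace ℝ E p))) : p ∈ C := by
  have hmem : toWeakSpace ℝ E p ∈ closure (toWeakSpace ℝ E '' C) :=
    mem_closure_of_tendsto hp (Eventually.of_forall fun i => Set.mem_image_of_mem _ (hx i))
  rwa [← hconvex.toWeakSpace_closure ℝ, hclosed.closure_eq,
    (toWeakSpace ℝ E).injective.mem_set_image] at hmem

theorem le_nhds_toWeakSpace_of_forall_convex_mem {U : Ultrafilter (WeakSpace ℝ E)} {q : E}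
    (hq : ∀ K, IsClosed K → Convex ℝ K → (toWeakSpace ℝ E).symm ⁻¹' K ∈ U → q ∈ K) :
    ↑U ≤ 𝓝 (toWeakSpace ℝ E q) := by
  refine tendsto_id'.1 (tendsto_toWeakSpace_iff (x := (toWeakSpace ℝ E).symm).2 fun f => ?_)
  have eventually_lt {f : StrongDual ℝ E} {a : ℝ} (ha : a < f q) :
      ∀ᶠ z in U, a < f ((toWeakSpace ℝ E).symm z) := by
    by_contra hU
    refine ha.not_ge (hq {z | f z ≤ a} (isClosed_le f.continuous continuous_const)
      (convex_halfSpace_le f.toLinearMap.isLinear a) ?_)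
    filter_upwards [Ultrafilter.eventually_not.2 hU] with z hz using not_lt.1 hz
  refine tendsto_order.2 ⟨fun a ha => eventually_lt ha, fun a ha => ?_⟩
  exact (eventually_lt (f := -f) (neg_lt_neg ha)).mono fun z hz => neg_lt_neg_iff.1 hz

variable [CompleteSpace E] [UniformConvexSpace E]

theorem isCompact_image_toWeakSpace (hclosed : IsClosed C) (hconvex : Convex ℝ C)
    (hbdd : Bornology.IsBounded C) : IsCompact (toWeakSpace ℝ E '' C) := by
  rw [LinearEquiv.image_eq_preimage_symm]
  refine isCompact_iff_ultrafilter_le_nhds'.2 fun U hU => ?_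
  let ι := {K : Set E // (IsClosed K ∧ Convex ℝ K) ∧ (toWeakSpace ℝ E).symm ⁻¹' K ∈ U}
  let K₀ : ι := ⟨C, ⟨hclosed, hconvex⟩, hU⟩
  have hι : Nonempty ι := ⟨K₀⟩
  have hdir : Directed (· ⊇ ·) fun K : ι => (K : Set E) := fun K L =>
    ⟨⟨K ∩ L, ⟨K.2.1.1.inter L.2.1.1, K.2.1.2.inter L.2.1.2⟩, inter_mem K.2.2 L.2.2⟩,
      Set.inter_subset_left, Set.inter_subset_right⟩
  obtain ⟨R, hR⟩ := hbdd.subset_closedBall 0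
  obtain ⟨q, hq⟩ := nonempty_iInter_of_directed_isClosed_convex hdir (fun K => K.2.1.1)
    (fun K => K.2.1.2) (R := R) fun K =>
      (U.nonempty_of_mem (inter_mem K.2.2 hU)).elim fun z hz => ⟨_, hz.1, hR hz.2⟩
  rw [Set.mem_iInter] at hq
  exact ⟨toWeakSpace ℝ E q, hq K₀,
    le_nhds_toWeakSpace_of_forall_convex_mem fun K hK hK' hKU => hq ⟨K, ⟨hK, hK'⟩, hKU⟩⟩

theorem isSeqCompact_image_toWeakSpace (hclosed : IsClosed C) (hconvex : Convex ℝ C)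
    (hbdd : Bornology.IsBounded C) : IsSeqCompact (toWeakSpace ℝ E '' C) := by
  intro z hz
  choose x hxC hxz using hz
  let M : Submodule ℝ E := (Submodule.span ℝ (Set.range x)).topologicalClosure
  have hxM (n : ℕ) : x n ∈ M :=
    Submodule.le_topologicalClosure _ (Submodule.subset_span (Set.mem_range_self n))
  have hcompact : IsCompact (toWeakSpace ℝ E '' (C ∩ M)) :=
    isCompact_image_toWeakSpace (hclosed.inter (Submodule.isClosed_topologicalClosure _))
      (hconvex.inter M.convex) (hbdd.subset Set.inter_subset_left)
  have hsep : TopologicalSpace.IsSeparable (C ∩ M) :=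
    ((Set.countable_range x).isSeparable.span (R := ℝ)).closure.mono Set.inter_subset_right
  have : TopologicalSpace.MetrizableSpace (toWeakSpace ℝ E '' (C ∩ M)) :=
    metrizableSpace_of_isCompact_of_isSeparable hcompact (by
      rwa [Set.preimage_image_eq _ (toWeakSpace ℝ E).injective])
  have hseq : IsSeqCompact (toWeakSpace ℝ E '' (C ∩ M)) :=
    isSeqCompact_iff_isSeqCompact_univ.2 (isCompact_iff_isCompact_univ.1 hcompact).isSeqCompact
  obtain ⟨p, hp, φ, hφ, hlim⟩ := hseq fun n => ⟨x n, ⟨hxC n, hxM n⟩, hxz n⟩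
  exact ⟨p, Set.image_mono Set.inter_subset_left hp, φ, hφ, hlim⟩

end WeakTopology

section Opial

variable {E : Type*} [NormedAddCommGroup E] [NormedSpace ℝ E]

variable (E) in
/-- Opial's condition: a weakly convergent sequence is asymptotically strictly closer to its weak
limit than to any other point. As weakly convergent sequences are bounded, the real-valued `liminf`
takes no junk value here. -/
def HasOpialProperty : Prop :=
  ∀ (z : ℕ → E) (u : E),
    Tendsto (fun n => toWeakSpace ℝ E (z n)) atTop (𝓝 (toWeakSpace ℝ E u)) →
    ∀ v : E, v ≠ u → liminf (fun n => ‖z n - u‖) atTop < liminf (fun n => ‖z n - v‖) atTop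

theorem HasOpialProperty.map_eq_self (hE : HasOpialProperty E) {T : E → E} {z : ℕ → E} {q : E}
    (hzq : Tendsto (fun n => toWeakSpace ℝ E (z n)) atTop (𝓝 (toWeakSpace ℝ E q)))
    (hTz : Tendsto (fun n => z n - T (z n)) atTop (𝓝 0))
    (hTq : ∀ n, ‖T (z n) - T q‖ ≤ ‖z n - q‖) : T q = q := by
  by_contra hne
  obtain ⟨R, hR⟩ := isBounded_iff_forall_norm_le.1 (isBounded_range_of_tendsto_toWeakSpace hzq)
  obtain ⟨c, hqc, hcT⟩ := exists_between (hE z q hzq (T q) hne)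
  obtain ⟨b, hqb, hbc⟩ := exists_between hqc
  have hnear : ∃ᶠ n in atTop, ‖z n - q‖ < b :=
    frequently_lt_of_liminf_lt (isCoboundedUnder_ge_of_le atTop (x := R + ‖q‖) fun n =>
      (norm_sub_le _ _).trans (by gcongr; exact hR _ (Set.mem_range_self n))) hqb
  have hfar : ∀ᶠ n in atTop, c < ‖z n - T q‖ :=
    eventually_lt_of_lt_liminf hcT (isBoundedUnder_of ⟨0, fun _ => norm_nonneg _⟩)
  have hclose : ∀ᶠ n in atTop, ‖z n - T (z n)‖ < c - b :=
    hTz.norm.eventually_lt_const (by simpa using hbc)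
  obtain ⟨n, hn, hcn, hTn⟩ := (hnear.and_eventually (hfar.and hclose)).exists
  linarith [norm_sub_le_norm_sub_add_norm_sub (z n) (T (z n)) (T q), hTq n]

theorem HasOpialProperty.eq_of_tendsto_norm_sub (hE : HasOpialProperty E) {x : ℕ → E}
    {φ ψ : ℕ → ℕ} (hφ : Tendsto φ atTop atTop) (hψ : Tendsto ψ atTop atTop) {p q : E} {d e : ℝ}
    (hp : Tendsto (fun n => toWeakSpace ℝ E (x (φ n))) atTop (𝓝 (toWeakSpace ℝ E p)))
    (hq : Tendsto (fun n => toWeakSpace ℝ E (x (ψ n))) atTop (𝓝 (toWeakSpace ℝ E q)))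
    (hd : Tendsto (fun n => ‖x n - p‖) atTop (𝓝 d))
    (he : Tendsto (fun n => ‖x n - q‖) atTop (𝓝 e)) : p = q := by
  by_contra hne
  have hde : d < e := by
    rw [← (hd.comp hφ).liminf_eq, ← (he.comp hφ).liminf_eq]
    exact hE _ p hp q (Ne.symm hne)
  have hed : e < d := by
    rw [← (hd.comp hψ).liminf_eq, ← (he.comp hψ).liminf_eq]
    exact hE _ q hq p hne
  exact lt_asymm hde hed

theorem HasOpialProperty.exists_tendsto_toWeakSpace (hE : HasOpialProperty E) {x : ℕ → E}
    {K : Set (WeakSpace ℝ E)} (hK : IsSeqCompact K) (hxK : ∀ n, toWeakSpace ℝ E (x n) ∈ K)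
    {S : Set E} (hnorm : ∀ p ∈ S, ∃ d, Tendsto (fun n => ‖x n - p‖) atTop (𝓝 d))
    (hS : ∀ (φ : ℕ → ℕ) (q : E), Tendsto φ atTop atTop →
      Tendsto (fun n => toWeakSpace ℝ E (x (φ n))) atTop (𝓝 (toWeakSpace ℝ E q)) → q ∈ S) :
    ∃ p ∈ S, Tendsto (fun n => toWeakSpace ℝ E (x n)) atTop (𝓝 (toWeakSpace ℝ E p)) := by
  obtain ⟨p, -, φ, hφ, hp⟩ := hK hxK
  have hpS : p ∈ S := hS φ p hφ.tendsto_atTop hp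
  refine ⟨p, hpS, tendsto_of_subseq_tendsto fun ns hns => ?_⟩
  obtain ⟨q, -, ψ, hψ, hq⟩ := hK fun n => hxK (ns n)
  have hnsψ := hns.comp hψ.tendsto_atTop
  obtain ⟨d, hd⟩ := hnorm p hpS
  obtain ⟨e, he⟩ := hnorm q (hS _ q hnsψ hq)
  obtain rfl := hE.eq_of_tendsto_norm_sub hφ.tendsto_atTop hnsψ hp hq hd he
  exact ⟨ψ, hq⟩

theorem HasOpialProperty.exists_tendsto_toWeakSpace_fixedPoint [CompleteSpace E]
    [UniformConvexSpace E] (hE : HasOpialProperty E) {C : Set E} (hclosed : IsClosed C)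
    (hconvex : Convex ℝ C) {T : E → E} (hT : ∀ u ∈ C, ∀ v ∈ C, ‖T u - T v‖ ≤ ‖u - v‖)
    {x : ℕ → E} (hxC : ∀ n, x n ∈ C) (hbdd : Bornology.IsBounded (Set.range x))
    (hnorm : ∀ p, p ∈ C ∧ T p = p → ∃ d, Tendsto (fun n => ‖x n - p‖) atTop (𝓝 d))
    (hreg : Tendsto (fun n => x n - T (x n)) atTop (𝓝 0)) :
    ∃ p, (p ∈ C ∧ T p = p) ∧
      Tendsto (fun n => toWeakSpace ℝ E (x n)) atTop (𝓝 (toWeakSpace ℝ E p)) := by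
  obtain ⟨R, hR⟩ := hbdd.subset_closedBall 0
  have hcompact : IsSeqCompact (toWeakSpace ℝ E '' (C ∩ Metric.closedBall 0 R)) :=
    isSeqCompact_image_toWeakSpace (hclosed.inter Metric.isClosed_closedBall)
      (hconvex.inter (convex_closedBall 0 R))
      (Metric.isBounded_closedBall.subset Set.inter_subset_right)
  refine hE.exists_tendsto_toWeakSpace hcompact
    (fun n => Set.mem_image_of_mem _ ⟨hxC n, hR (Set.mem_range_self n)⟩)
    (S := {p | p ∈ C ∧ T p = p}) hnorm fun φ q hφ hq => ?_
  have hqC : q ∈ C := mem_of_tendsto_toWeakSpace hclosed hconvex (fun n => hxC (φ n)) hq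
  exact ⟨hqC, hE.map_eq_self hq (hreg.comp hφ) fun n => hT _ (hxC _) q hqC⟩

end Opial

theorem mul_two_mul_norm_sub_norm_add_le {E : Type*} [SeminormedAddCommGroup E] [NormedSpace ℝ E]
    {u v : E} (hvu : ‖v‖ ≤ ‖u‖) {t : ℝ} (ht : t ∈ Set.Icc (0 : ℝ) 1) :
    t * (1 - t) * (2 * ‖u‖ - ‖u + v‖) ≤ ‖u‖ - ‖(1 - t) • u + t • v‖ := by
  have hgap : 0 ≤ 2 * ‖u‖ - ‖u + v‖ := by linarith [norm_add_le u v]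
  have h0 : 0 ≤ t := ht.1
  have h1 : 0 ≤ 1 - t := sub_nonneg.2 ht.2
  rcases le_total t (1 / 2) with h | h
  · have hcomb : ‖(1 - t) • u + t • v‖ ≤ (1 - 2 * t) * ‖u‖ + t * ‖u + v‖ := by
      rw [show (1 - t) • u + t • v = (1 - 2 * t) • u + t • (u + v) by module]
      refine (norm_add_le _ _).trans_eq ?_
      rw [norm_smul_of_nonneg (by linarith), norm_smul_of_nonneg h0]
    nlinarith [mul_nonneg (mul_nonneg h0 h0) hgap]
  · have hcomb : ‖(1 - t) • u + t • v‖ ≤ (2 * t - 1) * ‖v‖ + (1 - t) * ‖u + v‖ := by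
      rw [show (1 - t) • u + t • v = (2 * t - 1) • v + (1 - t) • (u + v) by module]
      refine (norm_add_le _ _).trans_eq ?_
      rw [norm_smul_of_nonneg (by linarith), norm_smul_of_nonneg h1]
    nlinarith [mul_nonneg (mul_nonneg h1 h1) hgap,
      mul_le_mul_of_nonneg_left hvu (show 0 ≤ 2 * t - 1 by linarith)]

/-- `x` is the Ishikawa iteration of `T` with coefficients `lam` and `gam`, where `y` is the
sequence of inner averages; the starting point `x 0` is left free. -/
structure IsIshikawaIteration {E : Type*} [AddCommGroup E] [Module ℝ E] (T : E → E)
    (lam gam : ℕ → ℝ) (x y : ℕ → E) : Prop where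
  inner_eq : ∀ n, y n = (1 - lam n) • x n + lam n • T (x n)
  succ_eq : ∀ n, x (n + 1) = (1 - gam n) • x n + gam n • T (y n)

namespace IsIshikawaIteration

section Convex

variable {E : Type*} [AddCommGroup E] [Module ℝ E] {T : E → E} {lam gam : ℕ → ℝ} {x y : ℕ → E}
  {C : Set E}

theorem inner_mem (h : IsIshikawaIteration T lam gam x y) (hC : Convex ℝ C) (hT : Set.MapsTo T C C)
    {n : ℕ} (hlam : lam n ∈ Set.Icc (0 : ℝ) 1) (hx : x n ∈ C) : y n ∈ C := by
  rw [h.inner_eq]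
  exact hC hx (hT hx) (sub_nonneg.2 hlam.2) hlam.1 (sub_add_cancel _ _)

theorem mem (h : IsIshikawaIteration T lam gam x y) (hC : Convex ℝ C) (hT : Set.MapsTo T C C)
    (hlam : ∀ n, lam n ∈ Set.Icc (0 : ℝ) 1) (hgam : ∀ n, gam n ∈ Set.Icc (0 : ℝ) 1)
    (h0 : x 0 ∈ C) (n : ℕ) : x n ∈ C := by
  induction n with
  | zero => exact h0
  | succ n ih =>
    rw [h.succ_eq]
    exact hC ih (hT (h.inner_mem hC hT (hlam n) ih)) (sub_nonneg.2 (hgam n).2) (hgam n).1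
      (sub_add_cancel _ _)

end Convex

variable {E : Type*} [SeminormedAddCommGroup E] [NormedSpace ℝ E] {T : E → E} {lam gam : ℕ → ℝ}
  {x y : ℕ → E} {p : E}

theorem mul_gap_le_norm_sub_norm_succ (h : IsIshikawaIteration T lam gam x y) {n : ℕ}
    (hlam : lam n ∈ Set.Icc (0 : ℝ) 1) (hgam : gam n ∈ Set.Icc (0 : ℝ) 1)
    (hTx : ‖T (x n) - p‖ ≤ ‖x n - p‖) (hTy : ‖T (y n) - p‖ ≤ ‖y n - p‖) :
    gam n * (lam n * (1 - lam n)) * (2 * ‖x n - p‖ - ‖(x n - p) + (T (x n) - p)‖) ≤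
      ‖x n - p‖ - ‖x (n + 1) - p‖ := by
  have hinner := mul_two_mul_norm_sub_norm_add_le hTx hlam
  rw [show (1 - lam n) • (x n - p) + lam n • (T (x n) - p) = y n - p by
    rw [h.inner_eq]; module] at hinner
  have houter : ‖x (n + 1) - p‖ ≤ (1 - gam n) * ‖x n - p‖ + gam n * ‖y n - p‖ := by
    rw [show x (n + 1) - p = (1 - gam n) • (x n - p) + gam n • (T (y n) - p) by
      rw [h.succ_eq]; module]
    refine (norm_add_le _ _).trans ?_
    rw [norm_smul_of_nonneg (sub_nonneg.2 hgam.2), norm_smul_of_nonneg hgam.1]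
    gcongr
    exact hgam.1
  linarith [mul_le_mul_of_nonneg_left hinner hgam.1]

theorem antitone_norm_sub (h : IsIshikawaIteration T lam gam x y)
    (hlam : ∀ n, lam n ∈ Set.Icc (0 : ℝ) 1) (hgam : ∀ n, gam n ∈ Set.Icc (0 : ℝ) 1)
    (hTx : ∀ n, ‖T (x n) - p‖ ≤ ‖x n - p‖) (hTy : ∀ n, ‖T (y n) - p‖ ≤ ‖y n - p‖) :
    Antitone fun n => ‖x n - p‖ := by
  refine antitone_nat_of_succ_le fun n => ?_
  have hcoef : 0 ≤ gam n * (lam n * (1 - lam n)) :=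
    mul_nonneg (hgam n).1 (mul_nonneg (hlam n).1 (sub_nonneg.2 (hlam n).2))
  have hgap : 0 ≤ 2 * ‖x n - p‖ - ‖(x n - p) + (T (x n) - p)‖ := by
    linarith [norm_add_le (x n - p) (T (x n) - p), hTx n]
  linarith [mul_nonneg hcoef hgap,
    h.mul_gap_le_norm_sub_norm_succ (hlam n) (hgam n) (hTx n) (hTy n)]

theorem exists_tendsto_norm_sub (h : IsIshikawaIteration T lam gam x y)
    (hlam : ∀ n, lam n ∈ Set.Icc (0 : ℝ) 1) (hgam : ∀ n, gam n ∈ Set.Icc (0 : ℝ) 1)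
    (hTx : ∀ n, ‖T (x n) - p‖ ≤ ‖x n - p‖) (hTy : ∀ n, ‖T (y n) - p‖ ≤ ‖y n - p‖) :
    ∃ d, Tendsto (fun n => ‖x n - p‖) atTop (𝓝 d) :=
  ⟨_, tendsto_atTop_ciInf (h.antitone_norm_sub hlam hgam hTx hTy)
    ⟨0, Set.forall_mem_range.2 fun _ => norm_nonneg _⟩⟩

theorem tendsto_sub_map_zero [UniformConvexSpace E] (h : IsIshikawaIteration T lam gam x y)
    (hlam : ∀ n, lam n ∈ Set.Icc (0 : ℝ) 1) (hgam : ∀ n, gam n ∈ Set.Icc (0 : ℝ) 1)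
    (hTx : ∀ n, ‖T (x n) - p‖ ≤ ‖x n - p‖) (hTy : ∀ n, ‖T (y n) - p‖ ≤ ‖y n - p‖)
    {c : ℝ} (hc : 0 < c) (hcoef : ∀ᶠ n in atTop, c ≤ gam n * (lam n * (1 - lam n))) :
    Tendsto (fun n => x n - T (x n)) atTop (𝓝 0) := by
  obtain ⟨d, hd⟩ := h.exists_tendsto_norm_sub hlam hgam hTx hTy
  have hgap_nonneg (n : ℕ) : 0 ≤ 2 * ‖x n - p‖ - ‖(x n - p) + (T (x n) - p)‖ := by
    linarith [norm_add_le (x n - p) (T (x n) - p), hTx n]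
  have hdecrease : Tendsto (fun n => (‖x n - p‖ - ‖x (n + 1) - p‖) / c) atTop (𝓝 0) := by
    simpa using (hd.sub (hd.comp (tendsto_add_atTop_nat 1))).div_const c
  have hgap : Tendsto (fun n => 2 * ‖x n - p‖ - ‖(x n - p) + (T (x n) - p)‖) atTop (𝓝 0) := by
    refine squeeze_zero' (Eventually.of_forall hgap_nonneg) ?_ hdecrease
    filter_upwards [hcoef] with n hn
    rw [le_div_iff₀' hc]
    exact (mul_le_mul_of_nonneg_right hn (hgap_nonneg n)).trans
      (h.mul_gap_le_norm_sub_norm_succ (hlam n) (hgam n) (hTx n) (hTy n))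
  have hsum : Tendsto (fun n => ‖(x n - p) + (T (x n) - p)‖) atTop (𝓝 (2 * d)) := by
    simpa using (hd.const_mul 2).sub hgap
  have himage : Tendsto (fun n => ‖T (x n) - p‖) atTop (𝓝 d) := by
    refine tendsto_of_tendsto_of_tendsto_of_le_of_le
      (show Tendsto _ atTop (𝓝 d) by simpa [two_mul] using hsum.sub hd) hd (fun n => ?_) hTx
    exact sub_le_iff_le_add'.2 (norm_add_le _ _)
  simpa using tendsto_sub_zero_of_tendsto_norm_add hd himage hsum

end IsIshikawaIteration

/-- Let `E` be a uniformly convex real Banach space satisfying Opial's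
condition, `C` a nonempty closed convex subset of `E`, and `T` a nonexpansive self-mapping of
`C` with a fixed point. Then the Ishikawa iteration (with `λₙ ∈ [0,1]`, `γₙ ∈ [a,1]`,
`0 < a ≤ 1`, `liminf λₙ(1−λₙ) > 0`) converges weakly to a fixed point of `T`. -/
theorem ishikawa_nonexpansive_weak_convergence
    {E : Type*} [NormedAddCommGroup E] [NormedSpace ℝ E] [CompleteSpace E]
    [UniformConvexSpace E]
    (hOpial : ∀ (z : ℕ → E) (u : E),
      (∀ f : E →L[ℝ] ℝ, Tendsto (fun n => f (z n)) atTop (𝓝 (f u))) →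
      ∀ v : E, v ≠ u →
        Filter.liminf (fun n => ‖z n - u‖) atTop < Filter.liminf (fun n => ‖z n - v‖) atTop)
    (C : Set E) (hCne : C.Nonempty) (hCcl : IsClosed C) (hCcv : Convex ℝ C)
    (T : E → E) (hTself : Set.MapsTo T C C)
    (hnonexp : ∀ x ∈ C, ∀ y ∈ C, ‖T x - T y‖ ≤ ‖x - y‖)
    (hF : ∃ p ∈ C, T p = p)
    (a : ℝ) (ha0 : 0 < a) (ha1 : a ≤ 1)
    (lam gam : ℕ → ℝ)
    (hlam : ∀ n, lam n ∈ Set.Icc (0 : ℝ) 1) (hgam : ∀ n, gam n ∈ Set.Icc a 1)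
    (hliminf : 0 < Filter.liminf (fun n => lam n * (1 - lam n)) atTop)
    (x y : ℕ → E) (x₀ : E) (hx₀ : x₀ ∈ C) (hinit : x 0 = x₀)
    (hy : ∀ n, y n = (1 - lam n) • x n + lam n • T (x n))
    (hxs : ∀ n, x (n + 1) = (1 - gam n) • x n + gam n • T (y n)) :
    ∃ p ∈ C, T p = p ∧
      ∀ f : E →L[ℝ] ℝ, Tendsto (fun n => f (x n)) atTop (𝓝 (f p)) := by
  have hgam' (n : ℕ) : gam n ∈ Set.Icc (0 : ℝ) 1 := Set.Icc_subset_Icc_left ha0.le (hgam n)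
  have h : IsIshikawaIteration T lam gam x y := ⟨hy, hxs⟩
  have hxC (n : ℕ) : x n ∈ C := h.mem hCcv hTself hlam hgam' (hinit ▸ hx₀) n
  have hyC (n : ℕ) : y n ∈ C := h.inner_mem hCcv hTself (hlam n) (hxC n)
  have hquasi {p : E} (hp : p ∈ C ∧ T p = p) {z : E} (hz : z ∈ C) : ‖T z - p‖ ≤ ‖z - p‖ := by
    simpa only [hp.2] using hnonexp z hz p hp.1
  have hnorm (p : E) (hp : p ∈ C ∧ T p = p) : ∃ d, Tendsto (fun n => ‖x n - p‖) atTop (𝓝 d) :=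
    h.exists_tendsto_norm_sub hlam hgam' (fun n => hquasi hp (hxC n)) fun n => hquasi hp (hyC n)
  obtain ⟨p₀, hp₀⟩ := hF
  obtain ⟨b, hb, hbl⟩ := exists_between hliminf
  have hcoef : ∀ᶠ n in atTop, a * b ≤ gam n * (lam n * (1 - lam n)) :=
    (eventually_lt_of_lt_liminf hbl (isBoundedUnder_of
      ⟨0, fun n => mul_nonneg (hlam n).1 (sub_nonneg.2 (hlam n).2)⟩)).mono fun n hn =>
        mul_le_mul (hgam n).1 hn.le hb.le (hgam' n).1
  have hreg : Tendsto (fun n => x n - T (x n)) atTop (𝓝 0) :=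
    h.tendsto_sub_map_zero hlam hgam' (fun n => hquasi hp₀ (hxC n)) (fun n => hquasi hp₀ (hyC n))
      (mul_pos ha0 hb) hcoef
  have hE : HasOpialProperty E := fun z u hz => hOpial z u (tendsto_toWeakSpace_iff.1 hz)
  obtain ⟨R, hR⟩ := (hnorm p₀ hp₀).choose_spec.bddAbove_range
  have hbdd : Bornology.IsBounded (Set.range x) := Metric.isBounded_closedBall.subset
    (Set.range_subset_iff.2 fun n => mem_closedBall_iff_norm.2 (hR ⟨n, rfl⟩))
  obtain ⟨p, ⟨hpC, hTp⟩, hp⟩ :=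
    hE.exists_tendsto_toWeakSpace_fixedPoint hCcl hCcv hnonexp hxC hbdd hnorm hreg
  exact ⟨p, hpC, hTp, tendsto_toWeakSpace_iff.1 hp⟩
end
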